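/- arXiv:1209.1155 — 2 statements merged into one kernel-verified Lean document; each statement's English description precedes it below -/
import Mathlib

section
/- Let A be a finite abelian group and k a field. Two 2-cocycles ψ₁, ψ₂: A × A → k^× are cohomologous if and only if their associated alternating forms β_i(a,b) = ψ_i(a,b)ψ_i(b,a)⁻¹ agree, provided k is algebraically closed. In particular, the map H²(A, k^×) → Hom(A ∧ A, k^×), [ψ] ↦ β_ψ, is an injective group homomorphism. -/
/-- The underlying set `A × M` of the extension of `A` by `M` attached to a 2-cocycle. -/
@[ext]
structure CocycleExtension (A M : Type*) where
  base : A
  fiber : M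

namespace CocycleExtension

variable {A M : Type*} [CommGroup A] [CommGroup M] {φ : A → A → M}

theorem cocycle_one_right (hcoc : ∀ a b c, φ a b * φ (a * b) c = φ b c * φ a (b * c)) (a : A) :
    φ a 1 = φ 1 1 := by
  simpa using hcoc a 1 1

/-- The group law on `A × M` twisted by a symmetric 2-cocycle. -/
abbrev commGroup (φ : A → A → M)
    (hcoc : ∀ a b c, φ a b * φ (a * b) c = φ b c * φ a (b * c))
    (hsymm : ∀ a b, φ a b = φ b a) : CommGroup (CocycleExtension A M) where
  mul x y := ⟨x.base * y.base, x.fiber * y.fiber * φ x.base y.base⟩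
  one := ⟨1, (φ 1 1)⁻¹⟩
  inv x := ⟨x.base⁻¹, x.fiber⁻¹ * (φ 1 1)⁻¹ * (φ x.base⁻¹ x.base)⁻¹⟩
  mul_assoc x y z := by
    refine CocycleExtension.ext (mul_assoc _ _ _) ?_
    have h := hcoc x.base y.base z.base
    calc x.fiber * y.fiber * φ x.base y.base * z.fiber * φ (x.base * y.base) z.base
        = x.fiber * y.fiber * z.fiber * (φ x.base y.base * φ (x.base * y.base) z.base) := by
          ac_rfl
      _ = x.fiber * (y.fiber * z.fiber * φ y.base z.base) * φ x.base (y.base * z.base) := by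
          rw [h]; ac_rfl
  one_mul x := by
    refine CocycleExtension.ext (one_mul _) ?_
    change (φ 1 1)⁻¹ * x.fiber * φ 1 x.base = x.fiber
    rw [hsymm 1 x.base, cocycle_one_right hcoc x.base, inv_mul_cancel_comm]
  mul_one x := by
    refine CocycleExtension.ext (mul_one _) ?_
    change x.fiber * (φ 1 1)⁻¹ * φ x.base 1 = x.fiber
    rw [cocycle_one_right hcoc x.base, inv_mul_cancel_right]
  inv_mul_cancel x := by
    refine CocycleExtension.ext (inv_mul_cancel _) ?_
    change x.fiber⁻¹ * (φ 1 1)⁻¹ * (φ x.base⁻¹ x.base)⁻¹ * x.fiber * φ x.base⁻¹ x.base = (φ 1 1)⁻¹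
    rw [mul_right_comm, inv_mul_cancel_right, mul_right_comm, inv_mul_cancel, one_mul]
  mul_comm x y := by
    refine CocycleExtension.ext (mul_comm _ _) ?_
    change x.fiber * y.fiber * φ x.base y.base = y.fiber * x.fiber * φ y.base x.base
    rw [hsymm, mul_comm x.fiber]

end CocycleExtension

/-- A symmetric 2-cocycle with values in a divisible abelian group is a coboundary. -/
theorem exists_coboundary_of_symmetric_cocycle {A M : Type*} [CommGroup A] [CommGroup M]
    (hdiv : ∀ n : ℕ, n ≠ 0 → Function.Surjective fun x : M => x ^ n) (φ : A → A → M)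
    (hcoc : ∀ a b c, φ a b * φ (a * b) c = φ b c * φ a (b * c))
    (hsymm : ∀ a b, φ a b = φ b a) :
    ∃ z : A → M, ∀ a b, φ a b = z a * z b * (z (a * b))⁻¹ := by
  let := CocycleExtension.commGroup φ hcoc hsymm
  let : DivisibleBy (Additive M) ℕ :=
    divisibleByOfSMulRightSurj (Additive M) ℕ fun {n} hn => hdiv n hn
  let : DivisibleBy (Additive M) ℤ := AddGroup.divisibleByIntOfDivisibleByNat (Additive M)
  let ι : M →* CocycleExtension A M :=
    MonoidHom.mk' (fun m => ⟨1, m * (φ 1 1)⁻¹⟩) fun m n => by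
      refine CocycleExtension.ext (one_mul _).symm ?_
      change m * n * (φ 1 1)⁻¹ = m * (φ 1 1)⁻¹ * (n * (φ 1 1)⁻¹) * φ 1 1
      rw [mul_assoc _ (n * _), inv_mul_cancel_right]
      ac_rfl
  have hι : Function.Injective ι.toAdditive := fun (m n : M) h =>
    mul_right_cancel (b := (φ 1 1)⁻¹) (congrArg CocycleExtension.fiber h)
  obtain ⟨r, hr⟩ := (Module.Baer.of_divisible (Additive M)).extension_property_addMonoidHom
    ι.toAdditive hι (AddMonoidHom.id _)
  let ρ : CocycleExtension A M →* M := AddMonoidHom.toMultiplicative r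
  have hρ (m : M) : ρ (ι m) = m := DFunLike.congr_fun hr (Additive.ofMul m)
  refine ⟨fun a => ρ ⟨a, 1⟩, fun a b => ?_⟩
  have key : (⟨a, 1⟩ * ⟨b, 1⟩ : CocycleExtension A M) = ⟨a * b, 1⟩ * ι (φ a b) := by
    refine CocycleExtension.ext (mul_one _).symm ?_
    change 1 * 1 * φ a b = 1 * (φ a b * (φ 1 1)⁻¹) * φ (a * b) 1
    rw [CocycleExtension.cocycle_one_right hcoc (a * b), one_mul, one_mul, one_mul,
      inv_mul_cancel_right]
  rw [← map_mul, key, map_mul, hρ, mul_inv_cancel_comm]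

theorem IsAlgClosed.units_pow_surjective {k : Type*} [Field k] [IsAlgClosed k] (n : ℕ)
    (hn : n ≠ 0) : Function.Surjective fun x : kˣ => x ^ n := by
  intro u
  obtain ⟨x, hx⟩ := IsAlgClosed.exists_pow_nat_eq (u : k) (Nat.pos_of_ne_zero hn)
  have hx0 : x ≠ 0 := by
    rintro rfl
    exact u.ne_zero (by rw [← hx, zero_pow hn])
  exact ⟨Units.mk0 x hx0, Units.ext hx⟩


/-- over an algebraically closed field `k`, two 2-cocycles `ψ₁, ψ₂` on a
finite abelian group `A` with values in `k^×` are cohomologous if and only if their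
associated alternating forms `β_i(a,b) = ψ_i(a,b) ψ_i(b,a)⁻¹` agree.  (Hence the map
`H²(A,k^×) → Hom(A ∧ A, k^×)` is an injective group homomorphism.) -/
theorem stmt_9 {A : Type} [CommGroup A] [Finite A] {k : Type} [Field k] [IsAlgClosed k]
    (ψ₁ ψ₂ : A → A → kˣ)
    (hcoc₁ : ∀ a b c : A, ψ₁ a b * ψ₁ (a * b) c = ψ₁ b c * ψ₁ a (b * c))
    (hcoc₂ : ∀ a b c : A, ψ₂ a b * ψ₂ (a * b) c = ψ₂ b c * ψ₂ a (b * c)) :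
    (∃ z : A → kˣ, ∀ a b : A, ψ₁ a b = z a * z b * (z (a * b))⁻¹ * ψ₂ a b) ↔
    (∀ a b : A, ψ₁ a b * (ψ₁ b a)⁻¹ = ψ₂ a b * (ψ₂ b a)⁻¹) := by
  constructor
  · rintro ⟨z, hz⟩ a b
    rw [hz a b, hz b a, mul_comm b a, mul_comm (z b), mul_inv, mul_mul_mul_comm, mul_inv_cancel,
      one_mul]
  · intro h
    obtain ⟨z, hz⟩ := exists_coboundary_of_symmetric_cocycle IsAlgClosed.units_pow_surjective
      (fun a b => ψ₁ a b / ψ₂ a b)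
      (fun a b c => by rw [div_mul_div_comm, div_mul_div_comm, hcoc₁, hcoc₂])
      (fun a b => by
        have hab := h a b
        rw [← div_eq_mul_inv, ← div_eq_mul_inv, div_eq_div_iff_mul_eq_mul] at hab
        rw [div_eq_div_iff_mul_eq_mul, hab, mul_comm])
    exact ⟨z, fun a b => by rw [← hz, div_mul_cancel]⟩
end

section
/- Let H be a finite-dimensional Hopf algebra over a field k. The Heisenberg double, i.e., the smash product algebra H* # H (where H acts on H* by the left hit action), is a simple algebra; in fact it is isomorphic to the matrix algebra End_k(H*). -/
open TensorProduct

variable {k : Type} [Field k] {H : Type} [Ring H] [HopfAlgebra k H]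

/-- The convolution product on the dual `H* = Hom(H, k)` of a Hopf algebra. -/
noncomputable def convMul (f g : Module.Dual k H) : Module.Dual k H :=
  (LinearMap.mul' k k) ∘ₗ (TensorProduct.map f g) ∘ₗ (Coalgebra.comul (R := k))

/-- The left hit action of `H` on `H*`: `(h ⇀ f)(a) = f(a h)`. -/
noncomputable def hitAction (h : H) (f : Module.Dual k H) : Module.Dual k H :=
  f ∘ₗ (LinearMap.mulRight k h)

open Coalgebra HopfAlgebra WithConv

section Antipode

variable {R A : Type*} [CommSemiring R] [Semiring A] [HopfAlgebra R A]

theorem comul_comp_antipode :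
    comul ∘ₗ antipode R (A := A) =
      TensorProduct.map (antipode R) (antipode R) ∘ₗ (TensorProduct.comm R A A).toLinearMap ∘ₗ
        comul := by
  let l : A →ₐ[R] A ⊗[R] A := Algebra.TensorProduct.includeLeft
  let r : A →ₐ[R] A ⊗[R] A := Algebra.TensorProduct.includeRight
  have comul_eq : toConv (comul (R := R) (A := A)) =
      toConv (l.toLinearMap ∘ₗ .id) * toConv (r.toLinearMap ∘ₗ .id) := by
    ext x
    rw [(ℛ R x).convMul_apply]
    simp [l, r, (ℛ R x).eq]
  have antipode_comp_mul (φ : A →ₐ[R] A ⊗[R] A) :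
      toConv (φ.toLinearMap ∘ₗ antipode R) * toConv (φ.toLinearMap ∘ₗ .id) = 1 := by
    have := LinearMap.algHom_comp_convMul_distrib φ (toConv (antipode R)) (toConv LinearMap.id)
    rw [LinearMap.antipode_mul_id] at this
    rw [← toConv_ofConv (_ * _)]
    refine (congrArg toConv this.symm).trans ?_
    ext x
    simp
  have left_inv : toConv (r.toLinearMap ∘ₗ antipode R) * toConv (l.toLinearMap ∘ₗ antipode R) *
      toConv (comul (R := R) (A := A)) = 1 := by
    rw [comul_eq, mul_assoc, ← mul_assoc (toConv (l.toLinearMap ∘ₗ antipode R)),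
      antipode_comp_mul, one_mul, antipode_comp_mul]
  rw [← toConv_injective.eq_iff,
    ← left_inv_eq_right_inv left_inv LinearMap.comul_right_inv]
  ext x
  rw [(ℛ R x).convMul_apply]
  simp only [LinearMap.comp_apply, LinearEquiv.coe_coe]
  simp [l, r, ← (ℛ R x).eq]

theorem comm_comul_antipode (x : A) :
    TensorProduct.comm R A A (comul (antipode R x)) =
      TensorProduct.map (antipode R) (antipode R) (comul (R := R) x) := by
  have := LinearMap.congr_fun (comul_comp_antipode (R := R) (A := A)) x
  simp only [LinearMap.comp_apply, LinearEquiv.coe_coe] at this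
  rw [this, ← TensorProduct.map_comm]
  simp

theorem antipode_isLeftRegular : IsLeftRegular (toConv (antipode R (A := A))) :=
  isLeftRegular_of_mul_eq_one LinearMap.id_mul_antipode

/-- Opposite convolutions precomposed with the antipode are convolutions. -/
theorem antipode_mul_comp_antipode_apply (f g : A →ₗ[R] A) (x : A) :
    (toConv (f ∘ₗ antipode R) * toConv (g ∘ₗ antipode R)) x =
      LinearMap.mul' R A
        (TensorProduct.map f g (TensorProduct.comm R A A (comul (antipode R x)))) := by
  rw [comm_comul_antipode, LinearMap.convMul_apply, TensorProduct.map_comp]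
  rfl

end Antipode

section FiniteDimensional

variable {K A : Type*} [Field K] [Ring A] [HopfAlgebra K A] [FiniteDimensional K A]

theorem antipode_injective : Function.Injective (antipode K (A := A)) := by
  let precomp : Module.End K A →ₗ[K] WithConv (A →ₗ[K] A) :=
    { toFun f := toConv (f ∘ₗ antipode K)
      map_add' _ _ := rfl
      map_smul' _ _ := rfl }
  let mulLeft := LinearMap.mulLeft K (toConv (antipode K (A := A)))
  have mapsTo : ∀ f ∈ LinearMap.range precomp, mulLeft f ∈ LinearMap.range precomp := by
    rintro _ ⟨f, rfl⟩
    refine ⟨LinearMap.mul' K A ∘ₗ TensorProduct.map .id f ∘ₗ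
      (TensorProduct.comm K A A).toLinearMap ∘ₗ comul, ?_⟩
    ext x
    exact (antipode_mul_comp_antipode_apply .id f x).symm
  have mulLeft_injective : Function.Injective (mulLeft.restrict mapsTo) := by
    rintro ⟨f, hf⟩ ⟨g, hg⟩ h
    have h : toConv (antipode K (A := A)) * f = toConv (antipode K) * g := congrArg Subtype.val h
    exact Subtype.ext (antipode_isLeftRegular h)
  have one_mem : (1 : WithConv (A →ₗ[K] A)) ∈ LinearMap.range precomp :=
    ⟨Algebra.linearMap K A ∘ₗ counit, congrArg toConv <| by
      rw [LinearMap.comp_assoc, counit_comp_antipode]⟩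
  obtain ⟨⟨_, f, rfl⟩, hf⟩ := LinearMap.injective_iff_surjective.mp mulLeft_injective ⟨1, one_mem⟩
  have hf : toConv (antipode K (A := A)) * precomp f = 1 := congrArg Subtype.val hf
  have id_eq : toConv LinearMap.id = precomp f :=
    left_inv_eq_right_inv LinearMap.id_mul_antipode hf
  exact Function.LeftInverse.injective (g := f) fun x ↦
    (LinearMap.congr_fun (toConv_injective id_eq) x).symm

theorem antipode_surjective : Function.Surjective (antipode K (A := A)) :=
  LinearMap.injective_iff_surjective.mp antipode_injective

theorem eq_zero_of_mul'_map_comm_comul_eq_zero (T : A →ₗ[K] A)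
    (hT : ∀ x : A, LinearMap.mul' K A
      (TensorProduct.map .id T (TensorProduct.comm K A A (comul x))) = 0) : T = 0 := by
  have antipode_mul : toConv (antipode K (A := A)) * toConv (T ∘ₗ antipode K) = 0 := by
    ext x
    exact (antipode_mul_comp_antipode_apply .id T x).trans (hT _)
  have comp_eq_zero : toConv (T ∘ₗ antipode K (A := A)) = 0 :=
    antipode_isLeftRegular (antipode_mul.trans (mul_zero _).symm)
  ext x
  obtain ⟨y, rfl⟩ := antipode_surjective (K := K) x
  exact LinearMap.congr_fun (toConv_injective comp_eq_zero) y

end FiniteDimensional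

theorem convMul_apply_eq_sum (f g : Module.Dual k H) {ι : Type*} {x : H} (r : Repr k x ι) :
    convMul f g x = ∑ i ∈ r.index, f (r.left i) * g (r.right i) := by
  simp [convMul, ← r.eq]

theorem convMul_assoc (f g p : Module.Dual k H) :
    convMul (convMul f g) p = convMul f (convMul g p) :=
  toConv_injective (mul_assoc (toConv f) (toConv g) (toConv p))

theorem hitAction_mul (h l : H) (p : Module.Dual k H) :
    hitAction (h * l) p = hitAction h (hitAction l p) := by
  ext x
  simp [hitAction, mul_assoc]

theorem hitAction_convMul {ι : Type*} {h : H} (r : Repr k h ι) (g p : Module.Dual k H) :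
    hitAction h (convMul g p) =
      ∑ i ∈ r.index, convMul (hitAction (r.left i) g) (hitAction (r.right i) p) := by
  ext x
  simp only [LinearMap.sum_apply, convMul_apply_eq_sum _ _ (ℛ k x)]
  simp [hitAction, convMul, ← (ℛ k x).eq, ← r.eq, Finset.sum_mul_sum]
  exact Finset.sum_comm

/-- The convolution product on `H*` as a bilinear map. -/
noncomputable def convMulₗ : Module.Dual k H →ₗ[k] Module.Dual k H →ₗ[k] Module.Dual k H :=
  LinearMap.mk₂ k convMul
    (fun _ _ _ ↦ by
      simp [convMul, TensorProduct.map_add_left, LinearMap.comp_add, LinearMap.add_comp])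
    (fun _ _ _ ↦ by
      simp [convMul, TensorProduct.map_smul_left, LinearMap.comp_smul, LinearMap.smul_comp])
    (fun _ _ _ ↦ by
      simp [convMul, TensorProduct.map_add_right, LinearMap.comp_add, LinearMap.add_comp])
    (fun _ _ _ ↦ by
      simp [convMul, TensorProduct.map_smul_right, LinearMap.comp_smul, LinearMap.smul_comp])

/-- The left hit action of `H` on `H*` as a bilinear map. -/
noncomputable def hitActionₗ : H →ₗ[k] Module.Dual k H →ₗ[k] Module.Dual k H :=
  LinearMap.mk₂ k hitAction
    (fun _ _ _ ↦ by ext; simp [hitAction, mul_add])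
    (fun _ _ _ ↦ by ext; simp [hitAction])
    (fun _ _ _ ↦ by ext; simp [hitAction])
    (fun _ _ _ ↦ by ext; simp [hitAction])

/-- The action of the Heisenberg double `H* # H` on `H*`, with `f # h` acting by
`p ↦ f (h ⇀ p)`. -/
noncomputable def heisenbergAction :
    (Module.Dual k H ⊗[k] H) →ₗ[k] Module.End k (Module.Dual k H) :=
  TensorProduct.lift ((LinearMap.llcomp k _ _ _ ∘ₗ convMulₗ).compl₂ hitActionₗ)

theorem heisenbergAction_tmul (f p : Module.Dual k H) (h : H) :
    heisenbergAction (f ⊗ₜ[k] h) p = convMul f (hitAction h p) := rfl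

theorem heisenbergAction_apply (t : Module.Dual k H ⊗[k] H) (p : Module.Dual k H) (x : H) :
    heisenbergAction t p x = p (LinearMap.mul' k H
      (TensorProduct.map .id (dualTensorHom k H H t) (TensorProduct.comm k H H (comul x)))) := by
  induction t with
  | zero => simp
  | add s t hs ht => simp [hs, ht, TensorProduct.map_add_right]
  | tmul f h =>
    rw [heisenbergAction_tmul, convMul_apply_eq_sum _ _ (ℛ k x), ← (ℛ k x).eq]
    simp [hitAction]

theorem heisenbergAction_injective [FiniteDimensional k H] :
    Function.Injective (heisenbergAction (k := k) (H := H)) := by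
  rw [injective_iff_map_eq_zero]
  intro t ht
  have dualTensorHom_eq_zero : dualTensorHom k H H t = 0 := by
    refine eq_zero_of_mul'_map_comm_comul_eq_zero _ fun x ↦ ?_
    rw [← Module.forall_dual_apply_eq_zero_iff k]
    intro p
    rw [← heisenbergAction_apply, ht]
    rfl
  exact (dualTensorHomEquiv k H H).injective (by simpa using dualTensorHom_eq_zero)

theorem heisenbergAction_bijective [FiniteDimensional k H] :
    Function.Bijective (heisenbergAction (k := k) (H := H)) := by
  have finrank_eq : Module.finrank k (Module.Dual k H ⊗[k] H) =
      Module.finrank k (Module.End k (Module.Dual k H)) := by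
    simp [Module.finrank_linearMap, Subspace.dual_finrank_eq]
  have injective_iff_surjective := LinearMap.injective_iff_surjective_of_finrank_eq_finrank (K := k)
    (V := Module.Dual k H ⊗[k] H) (V₂ := Module.End k (Module.Dual k H)) finrank_eq
    (f := heisenbergAction)
  exact ⟨heisenbergAction_injective, injective_iff_surjective.mp heisenbergAction_injective⟩

theorem isSimpleRing_moduleEnd (K V : Type*) [Field K] [AddCommGroup V] [Module K V]
    [FiniteDimensional K V] [Nontrivial V] : IsSimpleRing (Module.End K V) := by
  let b := Module.finBasis K V
  have : Nonempty (Fin (Module.finrank K V)) := b.index_nonempty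
  exact IsSimpleRing.of_ringEquiv (algEquivMatrix b).symm.toRingEquiv inferInstance

/-- for a finite-dimensional Hopf algebra `H`, the Heisenberg double
`H* # H` (with multiplication `(f # h)(g # l) = f (h₍₁₎ ⇀ g) # h₍₂₎ l`) is
isomorphic to the simple algebra `End_k(H*)`; in particular it is simple. -/
theorem stmt_12 [FiniteDimensional k H] :
    ∃ Φ : (Module.Dual k H ⊗[k] H) →ₗ[k] Module.End k (Module.Dual k H),
      Function.Bijective Φ ∧
      (∀ (f g : Module.Dual k H) (h l : H) (n : ℕ) (a b : Fin n → H),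
        Coalgebra.comul (R := k) h = ∑ i, (a i) ⊗ₜ[k] (b i) →
        Φ (f ⊗ₜ h) * Φ (g ⊗ₜ l)
          = ∑ i, Φ ((convMul f (hitAction (a i) g)) ⊗ₜ ((b i) * l))) ∧
      IsSimpleRing (Module.End k (Module.Dual k H)) := by
  refine ⟨heisenbergAction, heisenbergAction_bijective, fun f g h l n a b hab ↦ ?_, ?_⟩
  · ext1 p
    let r : Repr k h (Fin n) := ⟨Finset.univ, a, b, hab.symm⟩
    have hit := hitAction_convMul r g (hitAction l p)
    rw [LinearMap.sum_apply, Module.End.mul_apply]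
    simp only [heisenbergAction_tmul, hit, convMul_assoc, hitAction_mul]
    exact map_sum (convMulₗ f) _ _
  · have : Nontrivial H := (Bialgebra.counitAlgHom k H).toRingHom.domain_nontrivial
    exact isSimpleRing_moduleEnd k _
end
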